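/- Let r and s be positive integers with r \equiv 1 (mod 3), r \ge 4, and s \equiv 5 (mod 6). Then for every nonnegative integer n: (i) a_n(r,s) \equiv 1 (mod 9) iff every digit of n is 0 or 2; (ii) a_n(r,s) \equiv 3 (mod 9) iff the 3-adic expansion of n has exactly one occurrence of the string 21 and all digits of n not belonging to this occurrence are 0 or 2; (iii) a_n(r,s) \equiv 6 (mod 9) iff the 3-adic expansion of n has exactly one occurrence of the string 01 (including the case of a leading digit 1) and all digits of n not belonging to this occurrence are 0 or 2; (iv) in all other cases 9 divides a_n(r,s); in particular a_n(r,s) is never \equiv 2, 4, 5, 7, or 8 (mod 9). -/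

import Mathlib

open Finset

/-- The generalised Apéry numbers `a_n(r,s) = ∑_{k=0}^n C(n,k)^r C(n+k,k)^s`. -/
def apery (r s n : ℕ) : ℕ :=
  ∑ k ∈ Finset.range (n + 1), n.choose k ^ r * (n + k).choose k ^ s

/-- The number of digits among `d 0, …, d m` equal to `v`. -/
def digitCount (d : ℕ → ℕ) (m v : ℕ) : ℕ :=
  ((Finset.range (m + 1)).filter fun i => d i = v).card

/-- The number of occurrences of the string `ab` in the 3-adic expansion with digits
`d 0, …, d m` (using the convention that digits above position `m` are zero): indices `ν`
with `1 ≤ ν ≤ m + 1`, `d ν = a` and `d (ν - 1) = b`. -/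
def occ (d : ℕ → ℕ) (m a b : ℕ) : ℕ :=
  ((Finset.Icc 1 (m + 1)).filter fun ν => d ν = a ∧ d (ν - 1) = b).card

/-- The 3-adic expansion of `n` (digits `d 0, …, d m`) has exactly one occurrence of the
string `ab`, and all digits not belonging to this occurrence are `0` or `2`. -/
def uniqueOcc (d : ℕ → ℕ) (m a b : ℕ) : Prop :=
  occ d m a b = 1 ∧
  ∀ ν ∈ Finset.Icc 1 (m + 1), (d ν = a ∧ d (ν - 1) = b) →
    ∀ i ≤ m, i ≠ ν → i ≠ ν - 1 → (d i = 0 ∨ d i = 2)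

theorem choose_three_mul_zmod_nine (N : ℕ) : ∀ K : ℕ,
    ((3 * N).choose (3 * K) : ZMod 9) = N.choose K ∧
    ((3 * N).choose (3 * K + 1) : ZMod 9) = 3 * ((N - K) * N.choose K) ∧
    ((3 * N).choose (3 * K + 2) : ZMod 9) = 3 * ((N - K) * N.choose K) := by
  have h9 : (9 : ZMod 9) = 0 := by decide
  induction N with
  | zero =>
    intro K
    rcases K with _ | K
    · simp
    · simp [Nat.mul_add]
  | succ N ih =>
    intro K
    have e : 3 * (N + 1) = 3 * N + 1 + 1 + 1 := by ring
    rcases K with _ | K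
    · obtain ⟨h0, h1, h2⟩ := ih 0
      simp only [Nat.mul_zero, Nat.zero_add, Nat.choose_zero_right, Nat.cast_zero, Nat.cast_one]
        at h0 h1 h2
      rw [e]
      refine ⟨by simp, ?_, ?_⟩
      · simp only [Nat.choose_one_right, Nat.mul_zero, Nat.zero_add, Nat.choose_zero_right]
        push_cast
        ring
      · simp only [Nat.mul_zero, Nat.zero_add, Nat.choose_succ_succ' _ 1, Nat.choose_one_right,
          Nat.choose_zero_right]
        push_cast
        rw [h2]
        linear_combination (N : ZMod 9) * h9
    · obtain ⟨h0, h1, h2⟩ := ih K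
      obtain ⟨g0, g1, g2⟩ := ih (K + 1)
      have e0 : 3 * (K + 1) = 3 * K + 1 + 1 + 1 := by ring
      rw [e0] at *
      rw [e]
      simp only [Nat.choose_succ_succ'] at *
      push_cast at *
      refine ⟨?_, ?_, ?_⟩
      · linear_combination g0 + 3 * h2 + 3 * h1 + h0 + 2 * (N - K) * N.choose K * h9
      · linear_combination g1 + 3 * g0 + 3 * h2 + h1 + (N - K) * N.choose K * h9
      · linear_combination g2 + 3 * g1 + 3 * g0 + h2 +
          (N - K - 1) * N.choose (K + 1) * h9

theorem cast_succ_mul_choose_succ {R : Type*} [CommRing R] (M K : ℕ) :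
    ((K : R) + 1) * M.choose (K + 1) = (M - K) * M.choose K := by
  rcases le_or_gt K M with h | h
  · have := congrArg (Nat.cast (R := R)) (Nat.choose_succ_right_eq M K)
    rw [Nat.cast_mul, Nat.cast_mul, Nat.cast_sub h] at this
    push_cast at this
    linear_combination this
  · simp [Nat.choose_eq_zero_of_lt h, Nat.choose_eq_zero_of_lt (Nat.lt_succ_of_lt h)]

theorem choose_three_mul_add_one_zmod_nine (M K : ℕ) :
    ((3 * M + 1).choose (3 * K) : ZMod 9) = (1 + 3 * K) * M.choose K := by
  rcases K with _ | K
  · simp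
  · have h2 := (choose_three_mul_zmod_nine M K).2.2
    have g0 := (choose_three_mul_zmod_nine M (K + 1)).1
    have h := cast_succ_mul_choose_succ (R := ZMod 9) M K
    rw [show 3 * (K + 1) = 3 * K + 2 + 1 by ring] at *
    rw [Nat.choose_succ_succ' (3 * M)]
    push_cast at *
    linear_combination g0 + h2 - 3 * h

theorem choose_three_mul_add_two_zmod_nine (M K : ℕ) :
    ((3 * M + 2).choose (3 * K) : ZMod 9) = M.choose K := by
  have h9 : (9 : ZMod 9) = 0 := by decide
  rcases K with _ | K
  · simp
  · obtain ⟨-, h1, h2⟩ := choose_three_mul_zmod_nine M K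
    have g0 := (choose_three_mul_zmod_nine M (K + 1)).1
    rw [show 3 * (K + 1) = 3 * K + 1 + 1 + 1 by ring] at *
    simp only [Nat.choose_succ_succ' (3 * M + 1), Nat.choose_succ_succ' (3 * M)] at *
    push_cast at *
    linear_combination g0 + 2 * h2 + h1 + (M - K) * M.choose K * h9

theorem choose_three_mul_add_one_add_one_zmod_nine (M K : ℕ) :
    ((3 * M + 1).choose (3 * K + 1) : ZMod 9) = (1 + 3 * (M - K)) * M.choose K := by
  obtain ⟨h0, h1, -⟩ := choose_three_mul_zmod_nine M K
  rw [Nat.choose_succ_succ']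
  push_cast
  linear_combination h0 + h1

theorem choose_three_mul_add_two_add_one_zmod_nine (M K : ℕ) :
    ((3 * M + 2).choose (3 * K + 1) : ZMod 9) = (2 + 3 * M) * M.choose K := by
  have h1 := choose_three_mul_add_one_add_one_zmod_nine M K
  have h0 := choose_three_mul_add_one_zmod_nine M K
  rw [Nat.choose_succ_succ']
  push_cast
  linear_combination h0 + h1

theorem three_mul_pow_zmod_nine {t : ℕ} (ht : 2 ≤ t) (x : ZMod 9) : (3 * x) ^ t = 0 := by
  obtain ⟨u, rfl⟩ := Nat.exists_eq_add_of_le ht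
  rw [pow_add, show (3 * x) ^ 2 = 0 by revert x; decide, zero_mul]

theorem apery_three_mul_add (r s N b : ℕ) (hr : r ≠ 0) (hb : b < 3) :
    apery r s (3 * N + b) = ∑ K ∈ range (N + 1), ∑ c ∈ range 3,
      (3 * N + b).choose (3 * K + c) ^ r *
        (3 * N + b + (3 * K + c)).choose (3 * K + c) ^ s := by
  have split (f : ℕ → ℕ) (L : ℕ) :
      ∑ k ∈ range (3 * L), f k = ∑ K ∈ range L, ∑ c ∈ range 3, f (3 * K + c) := by
    induction L with
    | zero => simp
    | succ L ih => rw [Nat.mul_succ, sum_range_add, ih, sum_range_succ _ L]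
  rw [← split fun k => (3 * N + b).choose k ^ r * (3 * N + b + k).choose k ^ s, apery]
  refine sum_subset (range_mono (by omega)) fun k _ hk => ?_
  rw [Nat.choose_eq_zero_of_lt (by simpa using hk), zero_pow hr, zero_mul]

theorem apery_three_mul_zmod_nine {r : ℕ} (s N : ℕ) (hr : 2 ≤ r) :
    (apery r s (3 * N) : ZMod 9) = apery r s N := by
  have := apery_three_mul_add r s N 0 (by omega) (by omega)
  rw [Nat.add_zero] at this
  rw [this, apery]
  push_cast
  refine sum_congr rfl fun K _ => ?_
  obtain ⟨h0, h1, h2⟩ := choose_three_mul_zmod_nine N K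
  simp only [sum_range_succ, sum_range_zero, zero_add, h0, h1, h2,
    three_mul_pow_zmod_nine hr, zero_mul, add_zero, ← Nat.mul_add,
    (choose_three_mul_zmod_nine (N + K) K).1]

theorem apery_three_mul_add_two_zmod_nine {r s : ℕ} (N : ℕ) (hr : r ≠ 0) (hs : 2 ≤ s) :
    (apery r s (3 * N + 2) : ZMod 9) = apery r s N := by
  rw [apery_three_mul_add r s N 2 hr (by omega), apery]
  push_cast
  refine sum_congr rfl fun K _ => ?_
  obtain ⟨-, h1, h2⟩ := choose_three_mul_zmod_nine (N + K + 1) K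
  have g1 : ((3 * N + 2 + (3 * K + 1)).choose (3 * K + 1) : ZMod 9) ^ s = 0 := by
    rw [show 3 * N + 2 + (3 * K + 1) = 3 * (N + K + 1) by ring, h1, three_mul_pow_zmod_nine hs]
  have g2 : ((3 * N + 2 + (3 * K + 2)).choose (3 * K + 2) : ZMod 9) ^ s = 0 := by
    rw [show 3 * N + 2 + (3 * K + 2) = 3 * (N + K + 1) + 1 by ring, Nat.choose_succ_succ',
      Nat.cast_add, h1, h2, ← mul_add, three_mul_pow_zmod_nine hs]
  simp only [sum_range_succ, sum_range_zero, zero_add, g1, g2, mul_zero, add_zero,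
    choose_three_mul_add_two_zmod_nine]
  rw [show 3 * N + 2 + 3 * K = 3 * (N + K) + 2 by ring, choose_three_mul_add_two_zmod_nine]

theorem apery_three_mul_add_one_zmod_nine {r s : ℕ} (N : ℕ) (hr3 : r % 3 = 1) (hr : 2 ≤ r)
    (hs6 : s % 6 = 5) :
    (apery r s (3 * N + 1) : ZMod 9) = 3 * (N + 2) * apery r s N := by
  rw [apery_three_mul_add r s N 1 (by omega) (by omega), apery]
  push_cast
  rw [mul_sum]
  refine sum_congr rfl fun K _ => ?_
  have x2 : ((3 * N + 1).choose (3 * K + 2) : ZMod 9) ^ r = 0 := by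
    obtain ⟨-, h1, h2⟩ := choose_three_mul_zmod_nine N K
    rw [Nat.choose_succ_succ', Nat.cast_add, h1, h2, ← mul_add, three_mul_pow_zmod_nine hr]
  simp only [sum_range_succ, sum_range_zero, zero_add, x2, zero_mul, add_zero,
    choose_three_mul_add_one_zmod_nine, choose_three_mul_add_one_add_one_zmod_nine]
  rw [show 3 * N + 1 + 3 * K = 3 * (N + K) + 1 by ring, choose_three_mul_add_one_zmod_nine,
    show 3 * N + 1 + (3 * K + 1) = 3 * (N + K) + 2 by ring,
    choose_three_mul_add_two_add_one_zmod_nine]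
  have cube : ∀ x : ZMod 9, (1 + 3 * x) ^ 3 = 1 := by decide
  have sixth : ∀ x : ZMod 9, (2 + 3 * x) ^ 6 = 1 := by decide
  have e0 : (1 + 3 * (K : ZMod 9)) ^ r * (1 + 3 * (K : ZMod 9)) ^ s = 1 := by
    rw [← pow_add, ← Nat.div_add_mod (r + s) 3, show (r + s) % 3 = 0 by omega, pow_add, pow_mul,
      cube, one_pow, pow_zero, mul_one]
  have e1 : (1 + 3 * ((N : ZMod 9) - K)) ^ r * (2 + 3 * ((N + K : ℕ) : ZMod 9)) ^ s
      = 5 + 3 * N := by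
    rw [← Nat.div_add_mod r 3, ← Nat.div_add_mod s 6, hr3, hs6, pow_add, pow_add, pow_mul, pow_mul,
      cube, sixth, one_pow, one_pow, Nat.cast_add]
    generalize (N : ZMod 9) = A
    generalize (K : ZMod 9) = B
    revert A B
    decide
  simp only [mul_pow]
  linear_combination (N.choose K : ZMod 9) ^ r * ((N + K).choose K : ZMod 9) ^ s * (e0 + e1)

/-- The value of `apery r s n` modulo `9` in terms of the positions of the ternary digits `1`. -/
theorem apery_zmod_nine_of_digits {r s : ℕ} (hr3 : r % 3 = 1) (hr : 2 ≤ r) (hs6 : s % 6 = 5)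
    (m : ℕ) : ∀ d : ℕ → ℕ, (∀ i, d i ≤ 2) → (∀ i, m ≤ i → d i = 0) →
    ((∀ i, d i ≠ 1) ∧ (apery r s (∑ i ∈ range m, d i * 3 ^ i) : ZMod 9) = 1) ∨
    (∃ j, d j = 1 ∧ (∀ i, i ≠ j → d i ≠ 1) ∧
      (d (j + 1) = 2 ∧ (apery r s (∑ i ∈ range m, d i * 3 ^ i) : ZMod 9) = 3 ∨
       d (j + 1) = 0 ∧ (apery r s (∑ i ∈ range m, d i * 3 ^ i) : ZMod 9) = 6)) ∨
    (∃ j k, j ≠ k ∧ d j = 1 ∧ d k = 1) ∧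
      (apery r s (∑ i ∈ range m, d i * 3 ^ i) : ZMod 9) = 0 := by
  induction m with
  | zero =>
    intro d _ hd0
    left
    simp [hd0, apery]
  | succ m ih =>
    intro d hd2 hd0
    have hsum : ∑ i ∈ range (m + 1), d i * 3 ^ i
        = 3 * ∑ i ∈ range m, d (i + 1) * 3 ^ i + d 0 := by
      rw [sum_range_succ', mul_sum, pow_zero, mul_one]
      congr 1
      refine sum_congr rfl fun i _ => ?_
      ring
    have hmod : (∑ i ∈ range m, d (i + 1) * 3 ^ i) % 3 = d 1 := by
      rcases m with _ | m
      · simp [hd0]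
      · rw [sum_range_succ']
        simp only [pow_succ, ← mul_assoc, ← sum_mul]
        have := hd2 1
        simp
        omega
    specialize ih (fun i => d (i + 1)) (fun i => hd2 _) (fun i hi => hd0 _ (by omega))
    rw [hsum]
    generalize ∑ i ∈ range m, d (i + 1) * 3 ^ i = N at *
    by_cases h1 : d 0 = 1
    · rw [h1, apery_three_mul_add_one_zmod_nine N hr3 hr hs6]
      have key : (3 * (N + 2) : ZMod 9) = 3 * (d 1 + 2) := by
        have h9 : (9 : ZMod 9) = 0 := by decide
        rw [← hmod]
        conv_lhs => rw [← Nat.div_add_mod N 3]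
        push_cast
        linear_combination ((N / 3 : ℕ) : ZMod 9) * h9
      rw [key]
      rcases ih with ⟨hne, ha⟩ | ⟨j, hj, -, ⟨-, ha⟩ | ⟨-, ha⟩⟩ | ⟨⟨j, -, -, hj, -⟩, ha⟩
      · right; left
        refine ⟨0, h1, fun i hi => ?_, ?_⟩
        · obtain ⟨i, rfl⟩ := Nat.exists_eq_succ_of_ne_zero hi
          exact hne i
        · have h2 := hd2 1
          have h3 : d 1 ≠ 1 := hne 0
          have : d 1 = 2 ∨ d 1 = 0 := by omega
          rcases this with h | h
          · left
            refine ⟨h, ?_⟩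
            rw [ha, h]
            decide
          · right
            refine ⟨h, ?_⟩
            rw [ha, h]
            decide
      all_goals
        right; right
        refine ⟨⟨0, j + 1, by omega, h1, hj⟩, ?_⟩
        rw [ha]
        generalize (d 1 : ZMod 9) = x
        revert x
        decide
    · have ha' : (apery r s (3 * N + d 0) : ZMod 9) = apery r s N := by
        have : d 0 = 0 ∨ d 0 = 2 := by have := hd2 0; omega
        rcases this with h | h
        · rw [h]; exact apery_three_mul_zmod_nine s N hr
        · rw [h]; exact apery_three_mul_add_two_zmod_nine N (by omega) (by omega)
      rw [ha']
      rcases ih with ⟨hne, ha⟩ | ⟨j, hj, hne, ha⟩ | ⟨⟨j, k, hjk, hj, hk⟩, ha⟩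
      · left
        refine ⟨fun i => ?_, ha⟩
        rcases i with _ | i
        exacts [h1, hne i]
      · right; left
        refine ⟨j + 1, hj, fun i hi => ?_, ha⟩
        rcases i with _ | i
        exacts [h1, hne i (by omega)]
      · right; right
        exact ⟨⟨j + 1, k + 1, by omega, hj, hk⟩, ha⟩

theorem uniqueOcc_one_iff {d : ℕ → ℕ} {m a : ℕ} (hd2 : ∀ i, d i ≤ 2)
    (hd0 : ∀ i, m < i → d i = 0) (ha : a ≠ 1) :
    uniqueOcc d m a 1 ↔ ∃ j, d j = 1 ∧ d (j + 1) = a ∧ ∀ i, i ≠ j → d i ≠ 1 := by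
  constructor
  · rintro ⟨hocc, hrest⟩
    obtain ⟨ν, hν⟩ := card_eq_one.mp hocc
    have hmem : ν ∈ (Icc 1 (m + 1)).filter fun ν => d ν = a ∧ d (ν - 1) = 1 := by simp [hν]
    obtain ⟨hI, hν1, hν2⟩ := mem_filter.mp hmem
    have h1 := (mem_Icc.mp hI).1
    refine ⟨ν - 1, hν2, by rwa [Nat.sub_add_cancel h1], fun i hi h => ?_⟩
    have hm : i ≤ m := by
      by_contra hc
      have := hd0 i (by omega)
      omega
    have := hrest ν hI ⟨hν1, hν2⟩ i hm (by rintro rfl; exact ha (hν1 ▸ h)) hi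
    omega
  · rintro ⟨j, hj, hj1, hne⟩
    have hjm : j ≤ m := by
      by_contra hc
      have := hd0 j (by omega)
      omega
    refine ⟨card_eq_one.mpr ⟨j + 1, ?_⟩, ?_⟩
    · ext ν
      simp only [mem_filter, mem_Icc, mem_singleton]
      constructor
      · rintro ⟨⟨h1, -⟩, -, h2⟩
        by_contra hc
        exact hne (ν - 1) (by omega) h2
      · rintro rfl
        exact ⟨⟨by omega, by omega⟩, hj1, hj⟩
    · rintro ν - ⟨-, h2⟩ i - - hi
      have : ν - 1 = j := by
        by_contra hc
        exact hne _ hc h2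
      have h3 := hne i (by omega)
      have h4 := hd2 i
      omega

/-- Apéry numbers mod 9 for `r ≡ 1 (mod 3)`, `r ≥ 4`, `s ≡ 5 (mod 6)`. -/
theorem apery_mod_nine_r1_s5 (r s : ℕ) (hr : 0 < r) (hs : 0 < s)
    (hr3 : r % 3 = 1) (hr4 : 4 ≤ r) (hs6 : s % 6 = 5)
    (n m : ℕ) (d : ℕ → ℕ) (hd2 : ∀ i, d i ≤ 2) (hd0 : ∀ i, m < i → d i = 0)
    (hn : n = ∑ i ∈ Finset.range (m + 1), d i * 3 ^ i) :
    (apery r s n ≡ 1 [MOD 9] ↔ (∀ i ≤ m, d i = 0 ∨ d i = 2)) ∧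
    (apery r s n ≡ 3 [MOD 9] ↔ uniqueOcc d m 2 1) ∧
    (apery r s n ≡ 6 [MOD 9] ↔ uniqueOcc d m 0 1) ∧
    (¬ (∀ i ≤ m, d i = 0 ∨ d i = 2) ∧ ¬ uniqueOcc d m 2 1 ∧ ¬ uniqueOcc d m 0 1 → 9 ∣ apery r s n) ∧
    ¬ (apery r s n ≡ 2 [MOD 9]) ∧
    ¬ (apery r s n ≡ 4 [MOD 9]) ∧
    ¬ (apery r s n ≡ 5 [MOD 9]) ∧
    ¬ (apery r s n ≡ 7 [MOD 9]) ∧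
    ¬ (apery r s n ≡ 8 [MOD 9]) := by
  have hall : (∀ i ≤ m, d i = 0 ∨ d i = 2) ↔ ∀ i, d i ≠ 1 := by
    constructor
    · intro h i
      rcases le_or_gt i m with hi | hi
      · have := h i hi
        omega
      · have := hd0 i hi
        omega
    · intro h i _
      have := h i
      have := hd2 i
      omega
  have hdvd : 9 ∣ apery r s n ↔ apery r s n ≡ 0 [MOD 9] := Nat.modEq_zero_iff_dvd.symm
  rw [hall, uniqueOcc_one_iff hd2 hd0 (by decide), uniqueOcc_one_iff hd2 hd0 (by decide), hdvd]
  simp only [← ZMod.natCast_eq_natCast_iff]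
  have H := apery_zmod_nine_of_digits hr3 (by omega : 2 ≤ r) hs6 (m + 1) d hd2
    (fun i hi => hd0 i (by omega))
  rw [← hn] at H
  rcases H with ⟨hne, ha⟩ | ⟨j, hj, hne, ⟨hj1, ha⟩ | ⟨hj1, ha⟩⟩ | ⟨⟨j, k, hjk, hj, hk⟩, ha⟩
  · have hx (a : ℕ) : ¬ ∃ j, d j = 1 ∧ d (j + 1) = a ∧ ∀ i, i ≠ j → d i ≠ 1 :=
      fun ⟨j, hj, _⟩ => hne j hj
    have h0 : (∀ i, d i ≠ 1) ↔ True := iff_true_intro hne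
    simp only [ha, h0, hx]
    decide
  · have h0 : ¬ ∀ i, d i ≠ 1 := fun h => h j hj
    have h2 : ∃ j, d j = 1 ∧ d (j + 1) = 2 ∧ ∀ i, i ≠ j → d i ≠ 1 := ⟨j, hj, hj1, hne⟩
    have h3 : ¬ ∃ j, d j = 1 ∧ d (j + 1) = 0 ∧ ∀ i, i ≠ j → d i ≠ 1 := by
      rintro ⟨k, hk, hk1, -⟩
      have : k = j := by
        by_contra hc
        exact hne k hc hk
      subst this
      omega
    simp only [ha, h0, h2, h3]
    decide
  · have h0 : ¬ ∀ i, d i ≠ 1 := fun h => h j hj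
    have h2 : ¬ ∃ j, d j = 1 ∧ d (j + 1) = 2 ∧ ∀ i, i ≠ j → d i ≠ 1 := by
      rintro ⟨k, hk, hk1, -⟩
      have : k = j := by
        by_contra hc
        exact hne k hc hk
      subst this
      omega
    have h3 : ∃ j, d j = 1 ∧ d (j + 1) = 0 ∧ ∀ i, i ≠ j → d i ≠ 1 := ⟨j, hj, hj1, hne⟩
    simp only [ha, h0, h2, h3]
    decide
  · have h0 : ¬ ∀ i, d i ≠ 1 := fun h => h j hj
    have hx (a : ℕ) : ¬ ∃ j, d j = 1 ∧ d (j + 1) = a ∧ ∀ i, i ≠ j → d i ≠ 1 := by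
      rintro ⟨l, -, -, hl⟩
      have h1 : j = l := by
        by_contra hc
        exact hl j hc hj
      have h2 : k = l := by
        by_contra hc
        exact hl k hc hk
      exact hjk (h1.trans h2.symm)
    simp only [ha, h0, hx]
    decide
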